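/- Let μ be a tempered Borel measure on ℝ^d whose Fourier transform in the Parseval sense is a locally integrable function f : ℝ^d → [0,∞] with f(x) < ∞ for every x ≠ 0. Then for any β > 0, sup_{η ∈ ℝ^d} ∫_{ℝ^d} (1/(1+|ξ+η|²))^β μ(dξ) = ∫_{ℝ^d} (1/(1+|ξ|²))^β μ(dξ), i.e. the supremum over all shifts η of the shifted integral is attained at η = 0. -/

import Mathlib

/-!
The weight `(1 + |ξ|²)^(-β)` is a positive superposition of the Gaussians `exp (-t |ξ|²)`, `t > 0`,
namely `Γ(β)⁻¹ ∫₀^∞ t^(β-1) e^(-t) exp (-t |ξ|²) dt` (`bessel_eq_lintegral_gauss`). By Tonelli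
(`lintegral_bessel_eq`; tempered measures are s-finite) it suffices to prove, for each `t > 0`,
that the shift `η` does not increase `∫ exp (-t |ξ + η|²) μ(dξ)`.

With `b = 1 / (4 t)`, the function `ξ ↦ exp (-t |ξ + η|²)` is a constant multiple of the Fourier
transform of `φ_η(x) = exp (-i ⟪η, x⟫) exp (-b |x|²)` (`FTd_modGauss`). The Parseval identity turns
the integral into a multiple, independent of `η`, of `∫ φ_η f`, and since `f ≥ 0` this is bounded
in modulus by `∫ |φ_η| f = ∫ φ_0 f` (`integral_shifted_gauss_le`).
-/

open MeasureTheory Real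
open scoped ENNReal RealInnerProductSpace

noncomputable section

/-- Euclidean space `ℝ^d`. -/
abbrev Ed (d : ℕ) := EuclideanSpace ℝ (Fin d)

/-- Fourier transform on `ℝ^d`: `ℱφ(ξ) = ∫ e^{-i ξ·x} φ(x) dx`. -/
def FTd (d : ℕ) (φ : Ed d → ℂ) (ξ : Ed d) : ℂ :=
  ∫ x : Ed d, Complex.exp (-(Complex.I * ((⟪ξ, x⟫ : ℝ) : ℂ))) * φ x

/-- A Borel measure on `ℝ^d` is tempered if `∫ (1+|ξ|²)^{-k} dμ < ∞` for some `k ∈ ℕ`. -/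
def IsTempered (d : ℕ) (μ : Measure (Ed d)) : Prop :=
  ∃ k : ℕ, ∫⁻ ξ, ENNReal.ofReal ((1 + ‖ξ‖ ^ 2) ^ (-(k : ℝ))) ∂μ < ⊤

/-- Local integrability for `[0,∞]`-valued functions on `ℝ^d`. -/
def LocIntENN (d : ℕ) (g : Ed d → ℝ≥0∞) : Prop :=
  ∀ s : Set (Ed d), IsCompact s → ∫⁻ x in s, g x < ⊤

/-- `g` is the Fourier transform of `μ` in the Parseval sense:
`∫ φ(x) g(x) dx = (2π)^{-d} ∫ ℱφ(ξ) μ(dξ)` for every Schwartz function `φ` on `ℝ^d`. -/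
def ParsevalFT (d : ℕ) (g : Ed d → ℝ≥0∞) (μ : Measure (Ed d)) : Prop :=
  ∀ φ : SchwartzMap (Ed d) ℂ,
    ∫ x, φ x * (((g x).toReal : ℝ) : ℂ) =
      (((2 * π) ^ d : ℝ)⁻¹ : ℂ) * ∫ ξ, FTd d (fun y => φ y) ξ ∂μ

/-- `sinc a r = sin(a r)/r`, interpreted as `a` when `r = 0`. -/
def sinc (a r : ℝ) : ℝ := if r = 0 then a else Real.sin (a * r) / r

/-- Every polynomial is bounded against a Gaussian: `s ^ M ≤ M! e ^ s` with `s = 1 + r`, and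
`r - b r ^ 2 ≤ 1 / (4 b)`. -/
lemma one_add_pow_mul_exp_neg_sq_le {b : ℝ} (hb : 0 < b) (M : ℕ) {r : ℝ} (hr : 0 ≤ r) :
    (1 + r) ^ M * Real.exp (-b * r ^ 2) ≤ M.factorial * Real.exp (1 + 1 / (4 * b)) := by
  have h1 : (1 + r) ^ M ≤ M.factorial * Real.exp (1 + r) := by
    have := Real.pow_div_factorial_le_exp (1 + r) (by positivity) M
    rwa [div_le_iff₀' (by positivity)] at this
  have h2 : r - b * r ^ 2 ≤ 1 / (4 * b) := by
    rw [le_div_iff₀ (by positivity)]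
    nlinarith [sq_nonneg (2 * b * r - 1)]
  calc (1 + r) ^ M * Real.exp (-b * r ^ 2)
      ≤ (M.factorial * Real.exp (1 + r)) * Real.exp (-b * r ^ 2) := by gcongr
    _ = M.factorial * Real.exp (1 + (r - b * r ^ 2)) := by
        rw [mul_assoc, ← Real.exp_add]; congr 2; ring
    _ ≤ _ := by gcongr

/-- The Gaussian `x ↦ exp (-b ‖x‖ ^ 2)` as a real-valued Schwartz function. Its derivatives are
controlled by the Faà di Bruno bound, since all derivatives of `exp` equal `exp` and `‖x‖ ^ 2` has
temperate growth. -/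
def gaussSchwartz {V : Type*} [NormedAddCommGroup V] [InnerProductSpace ℝ V]
    (b : ℝ) (hb : 0 < b) : SchwartzMap V ℝ where
  toFun x := Real.exp (-b * ‖x‖ ^ 2)
  smooth' := Real.contDiff_exp.comp (contDiff_const.mul (contDiff_norm_sq ℝ))
  decay' m n := by
    have hf : Function.HasTemperateGrowth (fun x : V => -b * ‖x‖ ^ 2) := by
      have := Function.hasTemperateGrowth_norm_sq (H := V)
      fun_prop
    obtain ⟨k, C, hC, hle⟩ := hf.norm_iteratedFDeriv_le_uniform n
    refine ⟨n.factorial * (C + 1) ^ n *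
      ((m + k * n).factorial * Real.exp (1 + 1 / (4 * b))), fun x => ?_⟩
    have h1 : 1 ≤ (C + 1) * (1 + ‖x‖) ^ k :=
      one_le_mul_of_one_le_of_one_le (by linarith) (one_le_pow₀ (by simp))
    have key := norm_iteratedFDeriv_comp_le (𝕜 := ℝ) (g := Real.exp)
      (f := fun x : V => -b * ‖x‖ ^ 2) (n := n) (N := ((⊤ : ℕ∞) : WithTop ℕ∞)) Real.contDiff_exp hf.1
      (by exact_mod_cast le_top) x
      (C := Real.exp (-b * ‖x‖ ^ 2)) (D := (C + 1) * (1 + ‖x‖) ^ k)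
      (fun i _ => by
        rw [norm_iteratedFDeriv_eq_norm_iteratedDeriv, iteratedDeriv_eq_iterate,
          Real.iter_deriv_exp, Real.norm_of_nonneg (Real.exp_pos _).le])
      (fun i hi hin => by
        calc _ ≤ C * (1 + ‖x‖) ^ k := hle i hin x
          _ ≤ (C + 1) * (1 + ‖x‖) ^ k := by gcongr; linarith
          _ ≤ _ := le_self_pow₀ h1 (by omega))
    calc ‖x‖ ^ m * ‖iteratedFDeriv ℝ n (fun x : V => Real.exp (-b * ‖x‖ ^ 2)) x‖
        ≤ (1 + ‖x‖) ^ m * (n.factorial * Real.exp (-b * ‖x‖ ^ 2) *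
            ((C + 1) * (1 + ‖x‖) ^ k) ^ n) := by
          gcongr
          · linarith
          · exact key
      _ = n.factorial * (C + 1) ^ n *
            ((1 + ‖x‖) ^ (m + k * n) * Real.exp (-b * ‖x‖ ^ 2)) := by
          rw [mul_pow, ← pow_mul, pow_add]; ring
      _ ≤ _ := by
          exact mul_le_mul_of_nonneg_left
            (one_add_pow_mul_exp_neg_sq_le hb _ (norm_nonneg x)) (by positivity)

lemma hasTemperateGrowth_cexp_I : Function.HasTemperateGrowth
    (fun s : ℝ => Complex.exp (-(Complex.I * (s : ℂ)))) := by
  have hfun : (fun s : ℝ => Complex.exp (-(Complex.I * (s : ℂ)))) =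
      fun s : ℝ => Complex.exp ((-Complex.I) * (s : ℂ)) := by
    ext s; congr 1; ring
  rw [hfun]
  have hd : ∀ n : ℕ, iteratedDeriv n (fun s : ℝ => Complex.exp ((-Complex.I) * (s : ℂ))) =
      fun s : ℝ => (-Complex.I) ^ n * Complex.exp ((-Complex.I) * (s : ℂ)) := by
    intro n
    induction n with
    | zero => simp
    | succ n ih =>
      rw [iteratedDeriv_succ, ih]
      ext s
      have h := (((Complex.ofRealCLM.hasDerivAt (x := s)).const_mul (-Complex.I)).cexp.const_mul
        ((-Complex.I) ^ n)).deriv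
      simp only [Complex.ofRealCLM_apply] at h
      rw [h]
      push_cast
      ring
  refine ⟨?_, fun n => ⟨0, 1, fun x => ?_⟩⟩
  · exact (contDiff_const.mul Complex.ofRealCLM.contDiff).cexp
  · rw [norm_iteratedFDeriv_eq_norm_iteratedDeriv, hd]
    simp [Complex.norm_exp]

/-- The modulated Gaussian `x ↦ exp (-i ⟪η, x⟫) exp (-b ‖x‖ ^ 2)` as a Schwartz function. Its
Fourier transform is the Fourier transform of the Gaussian, evaluated at `ξ + η`. -/
def modGauss {d : ℕ} (b : ℝ) (hb : 0 < b) (η : Ed d) : SchwartzMap (Ed d) ℂ :=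
  SchwartzMap.smulLeftCLM ℂ (fun x : Ed d => Complex.exp (-(Complex.I * ((⟪η, x⟫ : ℝ) : ℂ))))
    ((gaussSchwartz b hb).postcompCLM Complex.ofRealCLM)

lemma modGauss_apply {d : ℕ} (b : ℝ) (hb : 0 < b) (η x : Ed d) :
    modGauss b hb η x = Complex.exp (-(Complex.I * ((⟪η, x⟫ : ℝ) : ℂ))) *
      ((Real.exp (-b * ‖x‖ ^ 2) : ℝ) : ℂ) := by
  have hg : Function.HasTemperateGrowth
      (fun x : Ed d => Complex.exp (-(Complex.I * ((⟪η, x⟫ : ℝ) : ℂ)))) :=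
    hasTemperateGrowth_cexp_I.comp (innerSL ℝ η).hasTemperateGrowth
  rw [modGauss, SchwartzMap.smulLeftCLM_apply_apply hg]
  rfl

lemma norm_modGauss {d : ℕ} (b : ℝ) (hb : 0 < b) (η x : Ed d) :
    ‖modGauss b hb η x‖ = Real.exp (-b * ‖x‖ ^ 2) := by
  rw [modGauss_apply, norm_mul, Complex.norm_real, Real.norm_of_nonneg (Real.exp_pos _).le]
  simp [Complex.norm_exp]

lemma FTd_modGauss {d : ℕ} (b : ℝ) (hb : 0 < b) (η ξ : Ed d) :
    FTd d (fun y => modGauss b hb η y) ξ =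
      ((π : ℂ) / (b : ℂ)) ^ ((d : ℂ) / 2) *
        ((Real.exp (-(1 / (4 * b)) * ‖ξ + η‖ ^ 2) : ℝ) : ℂ) := by
  have h := GaussianFourier.integral_cexp_neg_mul_sq_norm_add (V := Ed d) (b := (b : ℂ))
    (by simpa using hb) (-Complex.I) (ξ + η)
  rw [finrank_euclideanSpace_fin] at h
  rw [FTd]
  convert h using 2
  · ext x
    rw [modGauss_apply, Complex.ofReal_exp, ← Complex.exp_add, ← Complex.exp_add]
    congr 1
    rw [inner_add_left]
    push_cast
    ring
  · rw [Complex.ofReal_exp]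
    congr 1
    rw [neg_sq, Complex.I_sq]
    push_cast
    ring

lemma IsTempered.hasTemperateGrowth {d : ℕ} {μ : Measure (Ed d)} (h : IsTempered d μ) :
    μ.HasTemperateGrowth := by
  obtain ⟨k, hk⟩ := h
  refine ⟨⟨2 * k, ?_⟩⟩
  have hint : Integrable (fun ξ : Ed d => (1 + ‖ξ‖ ^ 2) ^ (-(k : ℝ))) μ := by
    refine ⟨(Measurable.aestronglyMeasurable (by fun_prop)), ?_⟩
    rw [hasFiniteIntegral_iff_ofReal (ae_of_all _ fun ξ => by positivity)]
    exact hk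
  refine hint.mono' (Measurable.aestronglyMeasurable (by fun_prop)) (ae_of_all _ fun ξ => ?_)
  rw [Real.norm_of_nonneg (by positivity), Real.rpow_neg (by positivity),
    Real.rpow_neg (by positivity), Real.rpow_natCast, Real.rpow_natCast, pow_mul]
  gcongr
  nlinarith [norm_nonneg ξ]

/-- A tempered measure is s-finite: it has a density with respect to the finite measure
`(1 + ‖ξ‖ ^ 2) ^ (-k) μ(dξ)`. -/
lemma IsTempered.sFinite {d : ℕ} {μ : Measure (Ed d)} (h : IsTempered d μ) : SFinite μ := by
  obtain ⟨k, hk⟩ := h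
  set w : Ed d → ℝ≥0∞ := fun ξ => ENNReal.ofReal ((1 + ‖ξ‖ ^ 2) ^ (-(k : ℝ))) with hw
  have hwm : Measurable w := by fun_prop
  have : IsFiniteMeasure (μ.withDensity w) := isFiniteMeasure_withDensity hk.ne
  have hpos : ∀ ξ, w ξ ≠ 0 := fun ξ => by
    simp only [hw, ne_eq, ENNReal.ofReal_eq_zero, not_le]
    positivity
  have hinv := withDensity_inv_same (μ := μ) hwm (ae_of_all _ hpos)
    (ae_of_all _ fun ξ => ENNReal.ofReal_ne_top)
  rw [← hinv]
  infer_instance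

lemma integrable_shifted_gauss {d : ℕ} {μ : Measure (Ed d)} (h : IsTempered d μ)
    {t : ℝ} (ht : 0 < t) (η : Ed d) :
    Integrable (fun ξ : Ed d => Real.exp (-t * ‖ξ + η‖ ^ 2)) μ := by
  have := h.hasTemperateGrowth
  have hi := ((gaussSchwartz (V := Ed d) t ht).compSubConstCLM ℝ (-η)).integrable (μ := μ)
  refine hi.congr (ae_of_all _ fun ξ => ?_)
  rw [SchwartzMap.compSubConstCLM_apply, sub_neg_eq_add]
  rfl

/-- The Gaussian case. By Parseval the left side is, up to a constant, `∫ φ f` for a modulated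
Gaussian `φ`; since `f ≥ 0`, removing the modulation can only increase the modulus. -/
lemma integral_shifted_gauss_le {d : ℕ} {μ : Measure (Ed d)}
    {f : Ed d → ℝ≥0∞} (hP : ParsevalFT d f μ) {t : ℝ} (ht : 0 < t) (η : Ed d) :
    ∫ ξ, Real.exp (-t * ‖ξ + η‖ ^ 2) ∂μ ≤ ∫ ξ, Real.exp (-t * ‖ξ‖ ^ 2) ∂μ := by
  -- `b` is chosen so that the Gaussian of parameter `b` has a transform of parameter `t`.
  have hb : 0 < 1 / (4 * t) := by positivity
  set b := 1 / (4 * t) with hbdef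
  have hbt : 1 / (4 * b) = t := by rw [hbdef]; field_simp
  set c : ℂ := (((2 * π) ^ d : ℝ)⁻¹ : ℂ) * ((π : ℂ) / (b : ℂ)) ^ ((d : ℂ) / 2) with hc
  have hc0 : 0 < ‖c‖ := by
    rw [norm_pos_iff, hc]
    refine mul_ne_zero (inv_ne_zero ?_) ?_
    · exact_mod_cast (by positivity : (2 * π) ^ d ≠ 0)
    · rw [Complex.cpow_def_of_ne_zero]
      · exact Complex.exp_ne_zero _
      · exact div_ne_zero (by exact_mod_cast pi_ne_zero) (by exact_mod_cast hb.ne')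
  have hpars : ∀ η : Ed d, ∫ x, modGauss b hb η x * (((f x).toReal : ℝ) : ℂ) =
      c * ((∫ ξ, Real.exp (-t * ‖ξ + η‖ ^ 2) ∂μ : ℝ) : ℂ) := by
    intro η
    rw [hP (modGauss b hb η)]
    simp_rw [FTd_modGauss, hbt]
    rw [integral_const_mul, integral_complex_ofReal, hc, mul_assoc]
  have hnorm : ∀ η : Ed d, ‖∫ x, modGauss b hb η x * (((f x).toReal : ℝ) : ℂ)‖ =
      ‖c‖ * ∫ ξ, Real.exp (-t * ‖ξ + η‖ ^ 2) ∂μ := by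
    intro η
    rw [hpars, norm_mul, Complex.norm_real,
      Real.norm_of_nonneg (integral_nonneg fun ξ => (Real.exp_pos _).le)]
  -- Without integrability both integrals below are `0`, so no integrability of `f` is needed.
  have hle : ‖∫ x, modGauss b hb η x * (((f x).toReal : ℝ) : ℂ)‖ ≤
      ∫ x, Real.exp (-b * ‖x‖ ^ 2) * (f x).toReal := by
    refine (norm_integral_le_integral_norm _).trans_eq (integral_congr_ae (ae_of_all _ fun x => ?_))
    simp only [norm_mul, norm_modGauss, Complex.norm_real,
      Real.norm_of_nonneg ENNReal.toReal_nonneg]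
  have hzero : ‖∫ x, modGauss b hb 0 x * (((f x).toReal : ℝ) : ℂ)‖ =
      ∫ x, Real.exp (-b * ‖x‖ ^ 2) * (f x).toReal := by
    have : ∀ x, modGauss b hb 0 x * (((f x).toReal : ℝ) : ℂ) =
        ((Real.exp (-b * ‖x‖ ^ 2) * (f x).toReal : ℝ) : ℂ) := fun x => by
      rw [modGauss_apply, inner_zero_left, Complex.ofReal_mul]; simp
    simp_rw [this]
    rw [integral_complex_ofReal, Complex.norm_real, Real.norm_of_nonneg]
    exact integral_nonneg fun x => mul_nonneg (Real.exp_pos _).le ENNReal.toReal_nonneg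
  rw [← hzero, hnorm, hnorm] at hle
  simpa using le_of_mul_le_mul_left hle hc0

lemma lintegral_shifted_gauss_le {d : ℕ} {μ : Measure (Ed d)} (hμ : IsTempered d μ)
    {f : Ed d → ℝ≥0∞} (hP : ParsevalFT d f μ) {t : ℝ} (ht : 0 < t) (η : Ed d) :
    ∫⁻ ξ, ENNReal.ofReal (Real.exp (-t * ‖ξ + η‖ ^ 2)) ∂μ ≤
      ∫⁻ ξ, ENNReal.ofReal (Real.exp (-t * ‖ξ‖ ^ 2)) ∂μ := by
  have h0 := integrable_shifted_gauss hμ ht 0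
  simp only [add_zero] at h0
  rw [← ofReal_integral_eq_lintegral_ofReal (integrable_shifted_gauss hμ ht η)
      (ae_of_all _ fun _ => (Real.exp_pos _).le),
    ← ofReal_integral_eq_lintegral_ofReal h0 (ae_of_all _ fun _ => (Real.exp_pos _).le)]
  exact ENNReal.ofReal_le_ofReal (integral_shifted_gauss_le hP ht η)

/-- The density `t ^ (β - 1) e ^ (-t) / Γ(β)` with which Gaussians are superposed to give
`(1 + r ^ 2) ^ (-β)`. -/
def gammaWeight (β t : ℝ) : ℝ≥0∞ :=
  ENNReal.ofReal ((Real.Gamma β)⁻¹ * (t ^ (β - 1) * Real.exp (-t)))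

lemma bessel_eq_lintegral_gauss {β : ℝ} (hβ : 0 < β) (r : ℝ) :
    ENNReal.ofReal ((1 / (1 + r ^ 2)) ^ β) =
      ∫⁻ t in Set.Ioi (0 : ℝ), gammaWeight β t * ENNReal.ofReal (Real.exp (-t * r ^ 2)) := by
  have hr : 0 < 1 + r ^ 2 := by positivity
  have hG := Real.Gamma_pos_of_pos hβ
  have h := Real.integral_rpow_mul_exp_neg_mul_Ioi hβ hr
  have hint : Integrable (fun t : ℝ => t ^ (β - 1) * Real.exp (-((1 + r ^ 2) * t)))
      (volume.restrict (Set.Ioi 0)) := by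
    by_contra hn
    rw [integral_undef hn] at h
    have : 0 < (1 / (1 + r ^ 2)) ^ β * Real.Gamma β := by positivity
    linarith
  have h2 : (1 / (1 + r ^ 2)) ^ β = ∫ t in Set.Ioi (0 : ℝ),
      (Real.Gamma β)⁻¹ * (t ^ (β - 1) * Real.exp (-((1 + r ^ 2) * t))) := by
    rw [integral_const_mul, h]; field_simp
  rw [h2, ofReal_integral_eq_lintegral_ofReal (hint.const_mul _)]
  · refine setLIntegral_congr_fun measurableSet_Ioi fun t ht => ?_
    have ht' : (0 : ℝ) < t := ht
    simp only [gammaWeight]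
    rw [← ENNReal.ofReal_mul (by positivity)]
    congr 1
    rw [mul_assoc, mul_assoc, ← Real.exp_add]
    congr 3
    ring
  · refine (ae_restrict_iff' measurableSet_Ioi).2 (ae_of_all _ fun t ht => ?_)
    have ht' : (0 : ℝ) < t := ht
    simp only [Pi.zero_apply]
    positivity

lemma lintegral_bessel_eq {d : ℕ} {μ : Measure (Ed d)} [SFinite μ] {β : ℝ} (hβ : 0 < β)
    (η : Ed d) :
    ∫⁻ ξ, ENNReal.ofReal ((1 / (1 + ‖ξ + η‖ ^ 2)) ^ β) ∂μ =
      ∫⁻ t in Set.Ioi (0 : ℝ), gammaWeight β t *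
        ∫⁻ ξ, ENNReal.ofReal (Real.exp (-t * ‖ξ + η‖ ^ 2)) ∂μ := by
  have hw : Measurable (gammaWeight β) := by unfold gammaWeight; fun_prop
  simp_rw [bessel_eq_lintegral_gauss hβ]
  rw [lintegral_lintegral_swap]
  · refine lintegral_congr fun t => lintegral_const_mul _ (by fun_prop)
  · refine Measurable.aemeasurable ?_
    exact (hw.comp measurable_snd).mul (by fun_prop)

/-- For any `β > 0`, the supremum over shifts `η` of
`∫ (1+|ξ+η|²)^{-β} μ(dξ)` equals its value at `η = 0`. -/
theorem stmt5 (d : ℕ) (μ : Measure (Ed d)) (hμt : IsTempered d μ)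
    (f : Ed d → ℝ≥0∞) (hfm : Measurable f) (hfloc : LocIntENN d f)
    (hffin : ∀ x : Ed d, x ≠ 0 → f x < ⊤) (hP : ParsevalFT d f μ)
    (β : ℝ) (hβ : 0 < β) :
    (⨆ η : Ed d, ∫⁻ ξ, ENNReal.ofReal ((1 / (1 + ‖ξ + η‖ ^ 2)) ^ β) ∂μ) =
      ∫⁻ ξ, ENNReal.ofReal ((1 / (1 + ‖ξ‖ ^ 2)) ^ β) ∂μ := by
  have := hμt.sFinite
  refine le_antisymm (iSup_le fun η => ?_) ?_
  · have h0 := lintegral_bessel_eq (μ := μ) hβ 0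
    simp only [add_zero] at h0
    rw [lintegral_bessel_eq hβ η, h0]
    refine setLIntegral_mono' measurableSet_Ioi fun t ht => ?_
    exact mul_le_mul_right (lintegral_shifted_gauss_le hμt hP ht η) _
  · exact (by simp : _ = _).le.trans
      (le_iSup (fun η : Ed d => ∫⁻ ξ, ENNReal.ofReal ((1 / (1 + ‖ξ + η‖ ^ 2)) ^ β) ∂μ) 0)
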